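/- arXiv:2305.02183 — 3 statements merged into one kernel-verified Lean document; each statement's English description precedes it below -/
import Mathlib

section
/- Let A be a finite-dimensional real affine space over V and δ : A → ℝ a quadratic function. There exists a unique symmetric bilinear form B on V such that 2δ(P) + 2δ(Q) − 4δ(midpoint(P,Q)) = (1/2)·B(Q − P, Q − P) for all P, Q ∈ A. -/
/-- A function `δ : A → ℝ` on a real affine space is *quadratic* if for all points
`P, Q` and all `α, β ∈ ℝ` with `α + β = 1`,
`δ(α·P + β·Q) = α(α−β)·δ(P) + β(β−α)·δ(Q) + 4αβ·δ(midpoint(P,Q))`. -/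
def IsQuadraticFn {V A : Type*} [AddCommGroup V] [Module ℝ V] [AddTorsor V A]
    (δ : A → ℝ) : Prop :=
  ∀ (P Q : A) (α β : ℝ), α + β = 1 →
    δ (AffineMap.lineMap P Q β) =
      α * (α - β) * δ P + β * (β - α) * δ Q + 4 * α * β * δ (midpoint ℝ P Q)

/-- `B` is the Hessian of `δ`:
`2δ(P) + 2δ(Q) − 4δ(midpoint(P,Q)) = (1/2)·B(Q−P, Q−P)` for all `P, Q`. -/
def IsHessianOf {V A : Type*} [AddCommGroup V] [Module ℝ V] [AddTorsor V A]
    (δ : A → ℝ) (B : LinearMap.BilinForm ℝ V) : Prop :=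
  ∀ P Q : A, 2 * δ P + 2 * δ Q - 4 * δ (midpoint ℝ P Q) =
    (1/2 : ℝ) * B (Q -ᵥ P) (Q -ᵥ P)

/-!
On every line `t ↦ P + t w`, the function `δ` is a polynomial of degree at most `2`; let `c(P, w)`
be its coefficient of `t²`. As a function on the affine space `A × V`, `c` is again quadratic, and
it is homogeneous of degree `2` in `w`. Comparing its values on two lines of `A × V` shows that such
a function does not depend on `P`.

The mixed difference `δ(P + x + y) - δ(P + x) - δ(P + y) + δ(P)` is half of
`c(P, x + y) - c(P + y, x - y)`, because the diagonals of a parallelogram bisect each other. So it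
does not depend on `P` either, which makes it biadditive; being of degree at most `2` along lines
makes it bilinear. It is the Hessian, and uniqueness is polarization.
-/

/-- The left-hand side `2δ(P) + 2δ(Q) − 4δ(midpoint(P,Q))` of the Hessian identity, with the second
point written as `Q = w +ᵥ P`. For quadratic `δ` it is the coefficient of `t ^ 2` in
`δ (t • w +ᵥ P)`. -/
noncomputable def secondDiff {V A : Type*} [AddCommGroup V] [Module ℝ V] [AddTorsor V A]
    (δ : A → ℝ) (P : A) (w : V) : ℝ :=
  2 * δ P + 2 * δ (w +ᵥ P) - 4 * δ (midpoint ℝ P (w +ᵥ P))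

/-- The mixed second difference of `δ` at `P` in the directions `x` and `y`; for quadratic `δ` it is
the value of the Hessian at `(x, y)`. -/
def mixedDiff {V A M : Type*} [AddCommGroup V] [AddTorsor V A] [AddCommGroup M]
    (δ : A → M) (P : A) (x y : V) : M :=
  δ (x +ᵥ y +ᵥ P) - δ (x +ᵥ P) - δ (y +ᵥ P) + δ P

section MixedDiff

variable {V A M : Type*} [AddCommGroup V] [AddTorsor V A] [AddCommGroup M]

theorem mixedDiff_comm (δ : A → M) (P : A) (x y : V) : mixedDiff δ P x y = mixedDiff δ P y x := by
  rw [mixedDiff, mixedDiff, vadd_comm x y]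
  abel

theorem mixedDiff_add_right (δ : A → M) (P : A) (x y z : V) :
    mixedDiff δ P x (y + z) = mixedDiff δ (z +ᵥ P) x y + mixedDiff δ P x z := by
  simp only [mixedDiff, add_vadd]
  abel

theorem two_mul_mixedDiff [Module ℝ V] (δ : A → ℝ) (P : A) (x y : V) :
    2 * mixedDiff δ P x y = secondDiff δ P (x + y) - secondDiff δ (y +ᵥ P) (x - y) := by
  have diagonals_bisect : midpoint ℝ (y +ᵥ P) (x +ᵥ P) = midpoint ℝ P ((x + y) +ᵥ P) := by
    nth_rw 3 [← zero_vadd V P]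
    rw [← midpoint_vadd_midpoint, ← midpoint_vadd_midpoint, midpoint_comm, ← midpoint_zero_add]
  rw [secondDiff, secondDiff, vadd_vadd (x - y), sub_add_cancel, diagonals_bisect, mixedDiff,
    vadd_vadd]
  ring

end MixedDiff

namespace IsQuadraticFn

variable {V W A A' : Type*} [AddCommGroup V] [Module ℝ V] [AddTorsor V A]
  [AddCommGroup W] [Module ℝ W] [AddTorsor W A']

theorem comp_affineMap {δ : A' → ℝ} (hδ : IsQuadraticFn δ) (f : A →ᵃ[ℝ] A') :
    IsQuadraticFn (δ ∘ f) := fun P Q α β h => by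
  simp only [Function.comp_apply, f.apply_lineMap, f.map_midpoint, hδ _ _ α β h]

theorem add {δ ε : A → ℝ} (hδ : IsQuadraticFn δ) (hε : IsQuadraticFn ε) :
    IsQuadraticFn (δ + ε) := fun P Q α β h => by
  simp only [Pi.add_apply, hδ P Q α β h, hε P Q α β h]
  ring

theorem const_smul {δ : A → ℝ} (hδ : IsQuadraticFn δ) (r : ℝ) :
    IsQuadraticFn (r • δ) := fun P Q α β h => by
  simp only [Pi.smul_apply, smul_eq_mul, hδ P Q α β h]
  ring

theorem apply_eq_of_homogeneous_snd {g : A × W → ℝ} (hg : IsQuadraticFn g)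
    (hom : ∀ (P : A) (t : ℝ) (w : W), g (P, t • w) = t ^ 2 * g (P, w)) (P Q : A) (w : W) :
    g (P, w) = g (Q, w) := by
  suffices apply_midpoint : ∀ P Q : A, g (midpoint ℝ P Q, w) = g (P, w) by
    rw [← apply_midpoint P Q, midpoint_comm, apply_midpoint Q P]
  intro P Q
  set R : A := AffineMap.lineMap P Q (-1 : ℝ)
  -- The line from `(P, w)` to `(Q, w)` passes through `(R, w)`, the one from `(P, 0)` to `(Q, w)`
  -- through `(R, -w)`, and `g` has the same value at these two points.
  have along_parallel : g (R, w) = 6 * g (P, w) + 3 * g (Q, w) - 8 * g (midpoint ℝ P Q, w) := by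
    have h := hg (P, w) (Q, w) 2 (-1) (by norm_num)
    rw [show AffineMap.lineMap (P, w) (Q, w) (-1 : ℝ) = (R, w) from
        Prod.ext rfl (AffineMap.lineMap_same_apply w _),
      show midpoint ℝ (P, w) (Q, w) = (midpoint ℝ P Q, w) from
        Prod.ext rfl (midpoint_self ℝ w)] at h
    linarith
  have along_oblique : g (R, w) = 3 * g (Q, w) - 2 * g (midpoint ℝ P Q, w) := by
    have h := hg (P, (0 : ℝ) • w) (Q, w) 2 (-1) (by norm_num)
    rw [show AffineMap.lineMap (P, (0 : ℝ) • w) (Q, w) (-1 : ℝ) = (R, (-1 : ℝ) • w) from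
        Prod.ext rfl (by simp [AffineMap.lineMap_apply]),
      show midpoint ℝ (P, (0 : ℝ) • w) (Q, w) = (midpoint ℝ P Q, (1 / 2 : ℝ) • w) from
        Prod.ext rfl (show midpoint ℝ ((0 : ℝ) • w) w = _ by simp [midpoint_eq_smul_add]),
      hom, hom, hom] at h
    linarith
  linarith

variable {δ : A → ℝ}

theorem apply_smul_vadd (hδ : IsQuadraticFn δ) (P : A) (w : V) (t : ℝ) :
    δ (t • w +ᵥ P) =
      δ P + t * (δ (w +ᵥ P) - δ P - secondDiff δ P w) + t ^ 2 * secondDiff δ P w := by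
  rw [← AffineMap.lineMap_vadd_apply, hδ P (w +ᵥ P) (1 - t) t (sub_add_cancel 1 t), secondDiff]
  ring

theorem secondDiff_smul (hδ : IsQuadraticFn δ) (P : A) (t : ℝ) (w : V) :
    secondDiff δ P (t • w) = t ^ 2 * secondDiff δ P w := by
  rw [secondDiff, midpoint, AffineMap.lineMap_vadd_apply, smul_smul, hδ.apply_smul_vadd,
    hδ.apply_smul_vadd, invOf_eq_inv]
  ring

theorem uncurry_secondDiff (hδ : IsQuadraticFn δ) :
    IsQuadraticFn fun p : A × V => secondDiff δ p.1 p.2 := by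
  let translate (t : ℝ) : A × V →ᵃ[ℝ] A := t • (AffineMap.snd : A × V →ᵃ[ℝ] V) +ᵥ AffineMap.fst
  convert ((hδ.comp_affineMap (translate 0)).const_smul 2).add
    (((hδ.comp_affineMap (translate 1)).const_smul 2).add
      ((hδ.comp_affineMap (translate ⅟2)).const_smul (-4))) using 1
  funext p
  simp only [secondDiff, midpoint, AffineMap.lineMap_vadd_apply, translate, Pi.add_apply,
    Pi.smul_apply, Function.comp_apply, AffineMap.vadd_apply, AffineMap.coe_smul, AffineMap.coe_fst,
    AffineMap.coe_snd, zero_smul, one_smul, zero_vadd, smul_eq_mul]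
  ring

theorem secondDiff_eq (hδ : IsQuadraticFn δ) (P Q : A) (w : V) :
    secondDiff δ P w = secondDiff δ Q w :=
  hδ.uncurry_secondDiff.apply_eq_of_homogeneous_snd hδ.secondDiff_smul P Q w

theorem mixedDiff_eq (hδ : IsQuadraticFn δ) (P Q : A) (x y : V) :
    mixedDiff δ P x y = mixedDiff δ Q x y := by
  have hP := two_mul_mixedDiff δ P x y
  have hQ := two_mul_mixedDiff δ Q x y
  rw [hδ.secondDiff_eq P Q, hδ.secondDiff_eq (y +ᵥ P) (y +ᵥ Q)] at hP
  linarith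

theorem mixedDiff_smul_right (hδ : IsQuadraticFn δ) (P : A) (t : ℝ) (x y : V) :
    mixedDiff δ P x (t • y) = t * mixedDiff δ P x y := by
  simp only [mixedDiff, vadd_comm x, hδ.apply_smul_vadd, hδ.secondDiff_eq (x +ᵥ P) P]
  ring

theorem mixedDiff_self (hδ : IsQuadraticFn δ) (P : A) (w : V) :
    mixedDiff δ P w w = 2 * secondDiff δ P w := by
  rw [mixedDiff, vadd_vadd, ← two_smul ℝ w, hδ.apply_smul_vadd]
  ring

/-- The Hessian of a quadratic function as a bilinear form. The base point `P` only serves to write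
down the mixed difference, which does not depend on it by `mixedDiff_eq`. -/
noncomputable def hessian (hδ : IsQuadraticFn δ) (P : A) : LinearMap.BilinForm ℝ V :=
  have add_right (x y z : V) : mixedDiff δ P x (y + z) = mixedDiff δ P x y + mixedDiff δ P x z := by
    rw [mixedDiff_add_right, hδ.mixedDiff_eq (z +ᵥ P) P]
  LinearMap.mk₂ ℝ (mixedDiff δ P)
    (fun x y z => by simp only [mixedDiff_comm δ P _ z, add_right])
    (fun t x y => by simp only [mixedDiff_comm δ P _ y, hδ.mixedDiff_smul_right, smul_eq_mul])
    add_right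
    (fun t x y => hδ.mixedDiff_smul_right P t x y)

theorem hessian_isSymm (hδ : IsQuadraticFn δ) (P : A) : (hδ.hessian P).IsSymm :=
  ⟨mixedDiff_comm δ P⟩

theorem isHessianOf_hessian (hδ : IsQuadraticFn δ) (O : A) : IsHessianOf δ (hδ.hessian O) := by
  intro P Q
  calc 2 * δ P + 2 * δ Q - 4 * δ (midpoint ℝ P Q)
      = secondDiff δ P (Q -ᵥ P) := by rw [secondDiff, vsub_vadd]
    _ = secondDiff δ O (Q -ᵥ P) := hδ.secondDiff_eq P O _
    _ = 1 / 2 * mixedDiff δ O (Q -ᵥ P) (Q -ᵥ P) := by rw [hδ.mixedDiff_self]; ring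

end IsQuadraticFn

theorem IsHessianOf.eq_of_isSymm {V A : Type*} [AddCommGroup V] [Module ℝ V] [AddTorsor V A]
    {δ : A → ℝ} {B C : LinearMap.BilinForm ℝ V} (hB : IsHessianOf δ B) (hC : IsHessianOf δ C)
    (hBs : B.IsSymm) (hCs : C.IsSymm) : B = C := by
  obtain ⟨O⟩ : Nonempty A := AddTorsor.nonempty (G := V)
  refine LinearMap.BilinForm.ext_of_isSymm hBs hCs fun v => ?_
  have h := (hB O (v +ᵥ O)).symm.trans (hC O (v +ᵥ O))
  rw [vadd_vsub] at h
  linarith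

theorem stmt9_general {V A : Type*} [AddCommGroup V] [Module ℝ V] [AddTorsor V A]
    (δ : A → ℝ) (hδ : IsQuadraticFn δ) :
    ∃! B : LinearMap.BilinForm ℝ V, (∀ x y, B x y = B y x) ∧ IsHessianOf δ B := by
  obtain ⟨O⟩ : Nonempty A := AddTorsor.nonempty (G := V)
  have hsymm := hδ.hessian_isSymm O
  have hhess := hδ.isHessianOf_hessian O
  exact ⟨hδ.hessian O, ⟨hsymm.eq, hhess⟩,
    fun C ⟨hCs, hC⟩ => hC.eq_of_isSymm hhess ⟨hCs⟩ hsymm⟩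

/-- Every quadratic function `δ : A → ℝ` has a unique symmetric
Hessian bilinear form `B` on `V`. -/
theorem stmt9 {V A : Type*} [AddCommGroup V] [Module ℝ V] [AddTorsor V A]
    [FiniteDimensional ℝ V] (δ : A → ℝ) (hδ : IsQuadraticFn δ) :
    ∃! B : LinearMap.BilinForm ℝ V, (∀ x y, B x y = B y x) ∧ IsHessianOf δ B :=
  stmt9_general δ hδ
end

section
/- Let A be a finite-dimensional real affine space over V with dim V = n, let g ≠ 0 be a symmetric bilinear form on V, and let (R_0, …, R_n) be an affine basis of A with barycentric coordinate functions w_0, …, w_n. Let δ^g_R be the unique quadratic function A → ℝ with Hessian g that vanishes at every R_i. Then (w_0, …, w_n, δ^g_R) is a basis of W_g, and its dual basis in the dual space of W_g is (ev_{R_0}, …, ev_{R_n}, v_m). -/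
section AffineFunctions

variable {k V P : Type*} [AddCommGroup V] [AddTorsor V P]

lemma exists_affineMap_of_map_lineMap {W Q : Type*} [Ring k] [Invertible (2 : k)] [Module k V]
    [AddCommGroup W] [Module k W] [AddTorsor W Q] {f : P → Q}
    (hf : ∀ p q t, f (AffineMap.lineMap p q t) = AffineMap.lineMap (f p) (f q) (t : k)) :
    ∃ F : P →ᵃ[k] Q, ⇑F = f := by
  obtain ⟨p⟩ : Nonempty P := inferInstance
  let φ : V → W := fun v => f (v +ᵥ p) -ᵥ f p
  have φ_zero : φ 0 = 0 := by simp [φ]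
  have φ_midpoint (u v : V) : φ (midpoint k u v) = midpoint k (φ u) (φ v) := by
    have hmid : midpoint k u v +ᵥ p = midpoint k (u +ᵥ p) (v +ᵥ p) := by
      rw [← midpoint_vadd_midpoint, midpoint_self]
    simp only [φ, hmid]
    rw [midpoint, hf, ← midpoint, ← midpoint_vsub_midpoint, midpoint_self]
  have φ_smul (t : k) (v : V) : φ (t • v) = t • φ v := by
    have hline : t • v +ᵥ p = AffineMap.lineMap p (v +ᵥ p) t := by simp [AffineMap.lineMap_apply]
    simp only [φ, hline, hf, AffineMap.lineMap_vsub_left]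
  let L : V →ₗ[k] W :=
    { AddMonoidHom.ofMapMidpoint k k φ φ_zero φ_midpoint with map_smul' := φ_smul }
  exact ⟨AffineMap.mk' f L p fun q => by simp [L, φ], rfl⟩

variable {ι : Type*}

lemma affineMap_apply_eq_sum_coord_smul {W : Type*} [Ring k] [Module k V] [AddCommGroup W]
    [Module k W] [Fintype ι] (b : AffineBasis ι k P) (f : P →ᵃ[k] W) (x : P) :
    f x = ∑ i, b.coord i x • f (b i) := by
  have hsum := b.sum_coord_apply_eq_one x
  conv_lhs => rw [← b.affineCombination_coord_eq_self x, Finset.map_affineCombination _ _ _ hsum,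
    Finset.affineCombination_eq_linear_combination _ _ _ hsum]
  rfl

lemma linearIndependent_coe_coord [Ring k] [Module k V] (b : AffineBasis ι k P) :
    LinearIndependent k fun i => ⇑(b.coord i) := by
  classical
  refine linearIndependent_iff'.2 fun s c hc i hi => ?_
  simpa [AffineBasis.coord_apply, hi] using congrFun hc (b i)

lemma mem_span_range_coe_coord_iff [CommRing k] [Module k V] [Finite ι] (b : AffineBasis ι k P)
    {φ : P → k} :
    φ ∈ Submodule.span k (Set.range fun i => ⇑(b.coord i)) ↔ ∃ f : P →ᵃ[k] k, ⇑f = φ := by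
  have := Fintype.ofFinite ι
  rw [Submodule.mem_span_range_iff_exists_fun]
  constructor
  · rintro ⟨c, rfl⟩
    refine ⟨(Fintype.linearCombination k c).toAffineMap.comp b.coords, funext fun x => ?_⟩
    simp [Fintype.linearCombination_apply, mul_comm]
  · rintro ⟨f, rfl⟩
    refine ⟨fun i => f (b i), funext fun x => ?_⟩
    simp [affineMap_apply_eq_sum_coord_smul b f x, mul_comm]

end AffineFunctions

section QuadraticFunctions

variable {V A : Type*} [AddCommGroup V] [Module ℝ V] [AddTorsor V A] {δ ε : A → ℝ}
  {B C : LinearMap.BilinForm ℝ V}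

lemma IsQuadraticFn.add_s12 (hδ : IsQuadraticFn δ) (hε : IsQuadraticFn ε) :
    IsQuadraticFn (δ + ε) := fun P Q α β h => by
  simp only [Pi.add_apply, hδ P Q α β h, hε P Q α β h]
  ring

lemma IsQuadraticFn.smul (hδ : IsQuadraticFn δ) (c : ℝ) : IsQuadraticFn (c • δ) :=
  fun P Q α β h => by
    simp only [Pi.smul_apply, smul_eq_mul, hδ P Q α β h]
    ring

lemma IsHessianOf.add_s12 (hδ : IsHessianOf δ B) (hε : IsHessianOf ε C) :
    IsHessianOf (δ + ε) (B + C) := fun P Q => by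
  simp only [Pi.add_apply, LinearMap.add_apply]
  linear_combination hδ P Q + hε P Q

lemma IsHessianOf.smul (hδ : IsHessianOf δ B) (c : ℝ) : IsHessianOf (c • δ) (c • B) :=
  fun P Q => by
    simp only [Pi.smul_apply, LinearMap.smul_apply, smul_eq_mul]
    linear_combination c * hδ P Q

lemma IsHessianOf.unique (hB : IsHessianOf δ B) (hC : IsHessianOf δ C) (hBs : B.IsSymm)
    (hCs : C.IsSymm) : B = C := by
  obtain ⟨P⟩ : Nonempty A := inferInstance
  refine LinearMap.BilinForm.ext_of_isSymm hBs hCs fun v => ?_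
  have hBv := hB P (v +ᵥ P)
  have hCv := hC P (v +ᵥ P)
  rw [vadd_vsub] at hBv hCv
  linarith

lemma exists_affineMap_eq_iff_isHessianOf_zero :
    (∃ f : A →ᵃ[ℝ] ℝ, ⇑f = δ) ↔
      IsQuadraticFn δ ∧ IsHessianOf δ (0 : LinearMap.BilinForm ℝ V) := by
  constructor
  · rintro ⟨f, rfl⟩
    have f_midpoint (P Q : A) : f (midpoint ℝ P Q) = (f P + f Q) / 2 := by
      rw [f.map_midpoint, midpoint_eq_smul_add, invOf_eq_inv, smul_eq_mul]
      ring
    refine ⟨fun P Q α β h => ?_, fun P Q => ?_⟩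
    · obtain rfl : α = 1 - β := by linarith
      rw [f.apply_lineMap, AffineMap.lineMap_apply_ring, f_midpoint]
      ring
    · rw [f_midpoint, LinearMap.zero_apply, LinearMap.zero_apply]
      ring
  · rintro ⟨hq, hh⟩
    refine exists_affineMap_of_map_lineMap fun P Q t => ?_
    have hline := hq P Q (1 - t) t (by ring)
    have hmid := hh P Q
    rw [LinearMap.zero_apply, LinearMap.zero_apply] at hmid
    rw [AffineMap.lineMap_apply_ring]
    linear_combination hline - (1 - t) * t * hmid

lemma exists_eq_add_affineMap_iff_isHessianOf (hεq : IsQuadraticFn ε) (hεh : IsHessianOf ε B) :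
    (∃ f : A →ᵃ[ℝ] ℝ, δ = ε + ⇑f) ↔ IsQuadraticFn δ ∧ IsHessianOf δ B := by
  constructor
  · rintro ⟨f, rfl⟩
    obtain ⟨hfq, hfh⟩ := exists_affineMap_eq_iff_isHessianOf_zero.1 ⟨f, rfl⟩
    exact ⟨hεq.add_s12 hfq, by simpa only [add_zero] using hεh.add_s12 hfh⟩
  · rintro ⟨hq, hh⟩
    have hcancel : B + (-1 : ℝ) • B = 0 := by module
    obtain ⟨f, hf⟩ := exists_affineMap_eq_iff_isHessianOf_zero.2
      ⟨hq.add_s12 (hεq.smul (-1)), hcancel ▸ hh.add_s12 (hεh.smul (-1))⟩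
    exact ⟨f, by rw [hf, neg_one_smul, add_comm δ, add_neg_cancel_left]⟩

end QuadraticFunctions

section BasisOfQuadraticSpace

variable {V A : Type*} [AddCommGroup V] [Module ℝ V] [AddTorsor V A] {δR : A → ℝ}
  {g : LinearMap.BilinForm ℝ V}

lemma linearIndependent_snoc_coord {m : ℕ} (b : AffineBasis (Fin m) ℝ A) (hgs : g.IsSymm)
    (hg0 : g ≠ 0) (hδRh : IsHessianOf δR g) :
    LinearIndependent ℝ (Fin.snoc (fun i => ⇑(b.coord i)) δR : Fin (m + 1) → A → ℝ) := by
  refine linearIndependent_finSnoc.2 ⟨linearIndependent_coe_coord b, fun hmem => hg0 ?_⟩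
  have hzero : IsHessianOf δR (0 : LinearMap.BilinForm ℝ V) :=
    (exists_affineMap_eq_iff_isHessianOf_zero.1 ((mem_span_range_coe_coord_iff b).1 hmem)).2
  exact hδRh.unique hzero hgs LinearMap.BilinForm.isSymm_zero

lemma mem_span_range_snoc_coord_iff {m : ℕ} (b : AffineBasis (Fin m) ℝ A)
    (hδRq : IsQuadraticFn δR) (hδRh : IsHessianOf δR g) {δ : A → ℝ} :
    δ ∈ Submodule.span ℝ
        (Set.range (Fin.snoc (fun i => ⇑(b.coord i)) δR : Fin (m + 1) → A → ℝ)) ↔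
      IsQuadraticFn δ ∧ ∃ c : ℝ, IsHessianOf δ (c • g) := by
  rw [Fin.range_snoc, Submodule.mem_span_insert, ← exists_and_left]
  refine exists_congr fun c => ?_
  rw [← exists_eq_add_affineMap_iff_isHessianOf (hδRq.smul c) (hδRh.smul c)]
  simp only [mem_span_range_coe_coord_iff, exists_exists_eq_and]

lemma eq_sum_coord_add_hessian_coeff {ι : Type*} [Fintype ι] (b : AffineBasis ι ℝ A)
    (hδRq : IsQuadraticFn δR) (hδRh : IsHessianOf δR g) (hδR0 : ∀ i, δR (b i) = 0)
    {δ : A → ℝ} {c : ℝ} (hq : IsQuadraticFn δ) (hh : IsHessianOf δ (c • g)) (X : A) :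
    δ X = (∑ i, δ (b i) * b.coord i X) + c * δR X := by
  obtain ⟨f, rfl⟩ :=
    (exists_eq_add_affineMap_iff_isHessianOf (hδRq.smul c) (hδRh.smul c)).2 ⟨hq, hh⟩
  simp only [Pi.add_apply, Pi.smul_apply, smul_eq_mul, hδR0, mul_zero, zero_add]
  rw [affineMap_apply_eq_sum_coord_smul b f X, add_comm]
  simp only [smul_eq_mul, mul_comm]

end BasisOfQuadraticSpace

/-- Let `g ≠ 0` be a symmetric bilinear form on `V`, let
`(R_0, …, R_n)` be an affine basis of `A` with barycentric coordinate functions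
`w_0, …, w_n`, and let `δ^g_R` be the (unique) quadratic function with Hessian `g`
vanishing at every `R_i`.  Then `(w_0, …, w_n, δ^g_R)` is a basis of `W_g` (the space
of quadratic functions whose Hessian is a scalar multiple of `g`): linearly
independent, spanning exactly `W_g`; and its dual basis is `(ev_{R_0}, …, ev_{R_n},
v_m)`, i.e. every `δ ∈ W_g` with Hessian `λ·g` satisfies
`δ = Σᵢ δ(Rᵢ)·wᵢ + λ·δ^g_R`. -/
theorem stmt12 {V A : Type*} [AddCommGroup V] [Module ℝ V] [AddTorsor V A]
    [FiniteDimensional ℝ V] {n : ℕ} (hn : Module.finrank ℝ V = n)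
    (b : AffineBasis (Fin (n + 1)) ℝ A)
    (g : LinearMap.BilinForm ℝ V) (hgs : ∀ x y, g x y = g y x) (hg0 : g ≠ 0)
    (δR : A → ℝ) (hδRq : IsQuadraticFn δR) (hδRh : IsHessianOf δR g)
    (hδR0 : ∀ i : Fin (n + 1), δR (b i) = 0) :
    LinearIndependent ℝ (fun i : Fin (n + 2) =>
        if h : (i : ℕ) < n + 1 then ⇑(b.coord ⟨(i : ℕ), h⟩) else δR) ∧
    (∀ δ : A → ℝ,
      δ ∈ Submodule.span ℝ (Set.range (fun i : Fin (n + 2) =>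
          if h : (i : ℕ) < n + 1 then ⇑(b.coord ⟨(i : ℕ), h⟩) else δR)) ↔
        (IsQuadraticFn δ ∧ ∃ c : ℝ, IsHessianOf δ (c • g))) ∧
    (∀ (δ : A → ℝ) (lam : ℝ), IsQuadraticFn δ → IsHessianOf δ (lam • g) →
        ∀ X : A, δ X =
          (∑ i : Fin (n + 1), δ (b i) * b.coord i X) + lam * δR X) := by
  -- The indexed family of the statement unfolds to `Fin.snoc (fun i => ⇑(b.coord i)) δR`.
  exact ⟨linearIndependent_snoc_coord b ⟨hgs⟩ hg0 hδRh,
    fun _ => mem_span_range_snoc_coord_iff b hδRq hδRh,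
    fun _ _ => eq_sum_coord_add_hessian_coeff b hδRq hδRh hδR0⟩
end

section
/- Let A be a finite-dimensional real affine space over V, let g ≠ 0 be a symmetric bilinear form on V, and let CM_g be the Cayley–Menger form of g. Then for every point P ∈ A and every linear functional φ on W_g: CM_g(ev_P, φ) = φ(δ^g_P), where δ^g_P ∈ W_g is the function δ^g_P(X) = (1/2)·g(X − P, X − P). -/
/-- `W_g`: the space of quadratic functions `A → ℝ` whose Hessian is a scalar
multiple of `g`, as a submodule of `A → ℝ`. -/
def Wg {V : Type*} [AddCommGroup V] [Module ℝ V]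
    (g : LinearMap.BilinForm ℝ V) (A : Type*) [AddTorsor V A] :
    Submodule ℝ (A → ℝ) where
  carrier := {δ : A → ℝ | IsQuadraticFn δ ∧ ∃ c : ℝ, IsHessianOf δ (c • g)}
  add_mem' := by
    rintro a b ⟨ha1, ca, ha2⟩ ⟨hb1, cb, hb2⟩
    refine ⟨fun P Q α β h => ?_, ca + cb, fun P Q => ?_⟩
    · have h1 := ha1 P Q α β h
      have h2 := hb1 P Q α β h
      simp only [Pi.add_apply]
      linear_combination h1 + h2
    · have h1 := ha2 P Q
      have h2 := hb2 P Q
      simp only [Pi.add_apply, LinearMap.add_apply, LinearMap.smul_apply,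
        smul_eq_mul] at h1 h2 ⊢
      linear_combination h1 + h2
  zero_mem' := by
    refine ⟨fun P Q α β h => ?_, 0, fun P Q => ?_⟩
    · simp only [Pi.zero_apply]; ring
    · simp only [Pi.zero_apply, zero_smul, LinearMap.zero_apply]; ring
  smul_mem' := by
    rintro c a ⟨ha1, ca, ha2⟩
    refine ⟨fun P Q α β h => ?_, c * ca, fun P Q => ?_⟩
    · have h1 := ha1 P Q α β h
      simp only [Pi.smul_apply, smul_eq_mul]
      linear_combination c * h1
    · have h1 := ha2 P Q
      simp only [Pi.smul_apply, smul_eq_mul, LinearMap.smul_apply] at h1 ⊢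
      linear_combination c * h1

/-- The evaluation functional `ev_P : W_g → ℝ` at a point `P`. -/
def evW {V : Type*} [AddCommGroup V] [Module ℝ V]
    (g : LinearMap.BilinForm ℝ V) {A : Type*} [AddTorsor V A] (P : A) :
    Module.Dual ℝ (Wg g A) where
  toFun δ := (δ : A → ℝ) P
  map_add' x y := rfl
  map_smul' c x := rfl

/-- `φ` annihilates the constant function `1 ∈ W_g`. -/
def AnnihilatesOne {V : Type*} [AddCommGroup V] [Module ℝ V]
    (g : LinearMap.BilinForm ℝ V) {A : Type*} [AddTorsor V A]
    (φ : Module.Dual ℝ (Wg g A)) : Prop :=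
  ∀ h1 : (fun _ : A => (1 : ℝ)) ∈ Wg g A, φ ⟨fun _ => (1 : ℝ), h1⟩ = 0

/-- `x ∈ V` represents the functional `φ` on `W_g`: for every affine function
`f : A → ℝ` (an element of `W_g`), `φ(f) = (linear part of f)(x)`. -/
def Represents {V : Type*} [AddCommGroup V] [Module ℝ V]
    (g : LinearMap.BilinForm ℝ V) {A : Type*} [AddTorsor V A]
    (φ : Module.Dual ℝ (Wg g A)) (x : V) : Prop :=
  ∀ (f : A →ᵃ[ℝ] ℝ) (hf : ⇑f ∈ Wg g A), φ ⟨⇑f, hf⟩ = f.linear x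

/-- `C` is a Cayley–Menger form for `g`: a symmetric bilinear form on the dual of
`W_g` such that (i) every evaluation functional `ev_P` is isotropic, and (ii) on
functionals annihilating the constant `1`, `C(φ, ψ) = −g(x_φ, x_ψ)`. -/
def IsCayleyMenger {V : Type*} [AddCommGroup V] [Module ℝ V]
    (g : LinearMap.BilinForm ℝ V) (A : Type*) [AddTorsor V A]
    (C : LinearMap.BilinForm ℝ (Module.Dual ℝ (Wg g A))) : Prop :=
  (∀ φ ψ, C φ ψ = C ψ φ) ∧
  (∀ P : A, C (evW g P) (evW g P) = 0) ∧
  (∀ (φ ψ : Module.Dual ℝ (Wg g A)) (x y : V),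
    AnnihilatesOne g φ → AnnihilatesOne g ψ →
    Represents g φ x → Represents g ψ y → C φ ψ = - g x y)

section AffineMap

open AffineMap (lineMap)

theorem exists_affineMap_coe_eq {k V₁ V₂ P₁ P₂ : Type*} [Ring k] [Invertible (2 : k)]
    [AddCommGroup V₁] [Module k V₁] [AddTorsor V₁ P₁]
    [AddCommGroup V₂] [Module k V₂] [AddTorsor V₂ P₂] (f : P₁ → P₂)
    (hf : ∀ (p q : P₁) (t : k), f (lineMap p q t) = lineMap (f p) (f q) t) :
    ∃ F : P₁ →ᵃ[k] P₂, ⇑F = f := by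
  obtain ⟨p⟩ : Nonempty P₁ := AddTorsor.nonempty
  have map_smul (t : k) (v : V₁) : f (t • v +ᵥ p) -ᵥ f p = t • (f (v +ᵥ p) -ᵥ f p) := by
    rw [← AffineMap.lineMap_vadd_apply p v t, hf, AffineMap.lineMap_vsub_left]
  have map_midpoint (q r : P₁) : f (midpoint k q r) = midpoint k (f q) (f r) := hf q r ⅟2
  have map_add (u v : V₁) :
      f ((u + v) +ᵥ p) -ᵥ f p = (f (u +ᵥ p) -ᵥ f p) + (f (v +ᵥ p) -ᵥ f p) := by
    have half_add : (⅟2 : k) • (u + v) +ᵥ p = midpoint k (u +ᵥ p) (v +ᵥ p) := by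
      rw [← midpoint_eq_smul_add, ← midpoint_vadd_midpoint, midpoint_self]
    have half_eq : (⅟2 : k) • (f ((u + v) +ᵥ p) -ᵥ f p) =
        (⅟2 : k) • ((f (u +ᵥ p) -ᵥ f p) + (f (v +ᵥ p) -ᵥ f p)) := by
      rw [← map_smul, half_add, map_midpoint, midpoint_vsub, smul_add]
    exact (isUnit_of_invertible (⅟2 : k)).smul_left_cancel.mp half_eq
  let L : V₁ →ₗ[k] V₂ :=
    { toFun := fun v => f (v +ᵥ p) -ᵥ f p
      map_add' := map_add
      map_smul' := map_smul }
  exact ⟨AffineMap.mk' f L p fun q => by simp [L], rfl⟩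

/-- The inclusion of the space of affine maps with values in a module into the space of all
functions, as a linear map; its range is the space of affine functions. -/
def affineMapCoeFn (k P W : Type*) {V : Type*} [CommRing k] [AddCommGroup V] [Module k V]
    [AddTorsor V P] [AddCommGroup W] [Module k W] : (P →ᵃ[k] W) →ₗ[k] P → W where
  toFun F := F
  map_add' := AffineMap.coe_add
  map_smul' := AffineMap.coe_smul

end AffineMap

theorem span_range_proj_domRestrict_eq_top {K ι : Type*} [Field K] (W : Submodule K (ι → K))
    [FiniteDimensional K W] :
    Submodule.span K (Set.range fun i => (LinearMap.proj i).domRestrict W) = ⊤ := by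
  refine Submodule.span_eq_top_of_ne_zero fun δ hδ => ?_
  obtain ⟨i, hi⟩ := Function.ne_iff.mp (Subtype.coe_ne_coe.mpr hδ)
  exact ⟨_, ⟨i, rfl⟩, hi⟩

section Quadratic

open AffineMap (lineMap)

variable {V A : Type*} [AddCommGroup V] [Module ℝ V] [AddTorsor V A]

/-- The function `δ^B_P`, half the squared distance from `P` as measured by `B`: the model of a
quadratic function with Hessian `B`. -/
noncomputable def quadraticAt (B : LinearMap.BilinForm ℝ V) (P X : A) : ℝ :=
  (1/2 : ℝ) * B (X -ᵥ P) (X -ᵥ P)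

theorem quadraticAt_smul (c : ℝ) (B : LinearMap.BilinForm ℝ V) (P : A) :
    quadraticAt (c • B) P = c • quadraticAt B P := by
  ext X
  simp only [quadraticAt, LinearMap.smul_apply, Pi.smul_apply, smul_eq_mul]
  ring

theorem quadraticAt_lineMap (B : LinearMap.BilinForm ℝ V) (O P Q : A) (t : ℝ) :
    quadraticAt B O (lineMap P Q t) =
      lineMap (quadraticAt B O P) (quadraticAt B O Q) t -
        t * (1 - t) / 2 * B (Q -ᵥ P) (Q -ᵥ P) := by
  have lineMap_vsub : lineMap P Q t -ᵥ O = (1 - t) • (P -ᵥ O) + t • (Q -ᵥ O) := by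
    rw [← AffineMap.lineMap_apply_module, ← AffineMap.lineMap_vsub_lineMap,
      AffineMap.lineMap_same_apply]
  rw [← vsub_sub_vsub_cancel_right Q P O]
  simp only [quadraticAt, lineMap_vsub, AffineMap.lineMap_apply_ring, map_add, map_sub, map_smul,
    LinearMap.add_apply, LinearMap.sub_apply, LinearMap.smul_apply, smul_eq_mul]
  ring

theorem IsQuadraticFn.apply_lineMap {δ : A → ℝ} {B : LinearMap.BilinForm ℝ V}
    (hδ : IsQuadraticFn δ) (hB : IsHessianOf δ B) (P Q : A) (t : ℝ) :
    δ (lineMap P Q t) =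
      lineMap (δ P) (δ Q) t - t * (1 - t) / 2 * B (Q -ᵥ P) (Q -ᵥ P) := by
  rw [AffineMap.lineMap_apply_ring]
  linear_combination hδ P Q (1 - t) t (sub_add_cancel 1 t) - t * (1 - t) * hB P Q

theorem IsQuadraticFn.exists_eq_affineMap_add {δ : A → ℝ} {B : LinearMap.BilinForm ℝ V}
    (hδ : IsQuadraticFn δ) (hB : IsHessianOf δ B) (P : A) :
    ∃ F : A →ᵃ[ℝ] ℝ, δ = F + quadraticAt B P := by
  obtain ⟨F, hF⟩ := exists_affineMap_coe_eq (k := ℝ) (δ - quadraticAt B P) fun Q R t => by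
    simp only [Pi.sub_apply, hδ.apply_lineMap hB, quadraticAt_lineMap,
      AffineMap.lineMap_apply_ring]
    ring
  exact ⟨F, by rw [hF, sub_add_cancel]⟩

end Quadratic

section EvaluationFunctionals

variable {V A : Type*} [AddCommGroup V] [Module ℝ V] [AddTorsor V A]

theorem Wg_le_range_sup_span (g : LinearMap.BilinForm ℝ V) (P : A) :
    Wg g A ≤ LinearMap.range (affineMapCoeFn ℝ A ℝ) ⊔ Submodule.span ℝ {quadraticAt g P} := by
  rintro δ ⟨hδ, c, hc⟩
  obtain ⟨F, rfl⟩ := hδ.exists_eq_affineMap_add hc P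
  rw [quadraticAt_smul]
  exact Submodule.add_mem_sup ⟨F, rfl⟩
    (Submodule.smul_mem _ c (Submodule.mem_span_singleton_self _))

instance finiteDimensional_Wg [FiniteDimensional ℝ V] (g : LinearMap.BilinForm ℝ V) :
    FiniteDimensional ℝ (Wg g A) :=
  have ⟨P⟩ : Nonempty A := AddTorsor.nonempty
  Submodule.finiteDimensional_of_le (Wg_le_range_sup_span g P)

theorem span_range_evW [FiniteDimensional ℝ V] (g : LinearMap.BilinForm ℝ V) :
    Submodule.span ℝ (Set.range (evW g (A := A))) = ⊤ :=
  span_range_proj_domRestrict_eq_top (Wg g A)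

theorem annihilatesOne_evW_sub_evW (g : LinearMap.BilinForm ℝ V) (P Q : A) :
    AnnihilatesOne g (evW g Q - evW g P) :=
  fun _ => sub_self (1 : ℝ)

theorem represents_evW_sub_evW (g : LinearMap.BilinForm ℝ V) (P Q : A) :
    Represents g (evW g Q - evW g P) (Q -ᵥ P) :=
  fun F _ => (F.linearMap_vsub Q P).symm

theorem IsCayleyMenger.apply_evW_evW {g : LinearMap.BilinForm ℝ V}
    {C : LinearMap.BilinForm ℝ (Module.Dual ℝ (Wg g A))} (hC : IsCayleyMenger g A C) (P Q : A) :
    C (evW g P) (evW g Q) = quadraticAt g P Q := by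
  obtain ⟨symm, isotropic, apply_of_annihilatesOne⟩ := hC
  have expand : C (evW g Q - evW g P) (evW g Q - evW g P) = -2 * C (evW g P) (evW g Q) := by
    simp only [map_sub, LinearMap.sub_apply, isotropic, symm (evW g Q) (evW g P)]
    ring
  have polar : C (evW g Q - evW g P) (evW g Q - evW g P) = -g (Q -ᵥ P) (Q -ᵥ P) :=
    apply_of_annihilatesOne _ _ _ _
      (annihilatesOne_evW_sub_evW g P Q) (annihilatesOne_evW_sub_evW g P Q)
      (represents_evW_sub_evW g P Q) (represents_evW_sub_evW g P Q)
  unfold quadraticAt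
  linarith

end EvaluationFunctionals

/-- For the Cayley–Menger form `C = CM_g` of a nonzero symmetric
bilinear form `g`, for every point `P` and every functional `φ` on `W_g`:
`C(ev_P, φ) = φ(δ^g_P)`, where `δ^g_P(X) = (1/2)·g(X − P, X − P)` (an element of
`W_g`). -/
theorem stmt16 {V A : Type*} [AddCommGroup V] [Module ℝ V] [AddTorsor V A]
    [FiniteDimensional ℝ V]
    (g : LinearMap.BilinForm ℝ V) (hgs : ∀ x y, g x y = g y x) (hg0 : g ≠ 0)
    (C : LinearMap.BilinForm ℝ (Module.Dual ℝ (Wg g A)))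
    (hC : IsCayleyMenger g A C) :
    ∀ (P : A) (φ : Module.Dual ℝ (Wg g A))
      (hm : (fun X : A => (1/2 : ℝ) * g (X -ᵥ P) (X -ᵥ P)) ∈ Wg g A),
      C (evW g P) φ = φ ⟨fun X : A => (1/2 : ℝ) * g (X -ᵥ P) (X -ᵥ P), hm⟩ := by
  intro P φ hm
  suffices C (evW g P) = Module.Dual.eval ℝ (Wg g A) ⟨quadraticAt g P, hm⟩ from
    LinearMap.congr_fun this φ
  exact LinearMap.ext_on_range (span_range_evW g) (hC.apply_evW_evW P)
end
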